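/- Let (X, μ) be a measure space with μ(X) < ∞ and let K > 0. Then there exist constants C > 0 and κ > 0, depending only on K and μ(X), with the following property: whenever φ : X → ℝ is measurable, A ≥ 0, and ‖φ‖_{L^p(μ)} ≤ K A p^{3/4} for every real p ≥ 1, then ∫_X e^{|φ|} dμ ≤ C · exp(κ A⁴). -/

import Mathlib

open MeasureTheory

lemma term_bound (a : ℝ) (ha : 0 ≤ a) (n : ℕ) :
    (a * (n : ℝ) ^ ((3 : ℝ) / 4)) ^ n / (n.factorial : ℝ) ≤
      (1 / 2) ^ n * Real.exp (4 * a ^ 4 * Real.exp 3) := by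
  have hn : (0 : ℝ) ≤ n := Nat.cast_nonneg n
  have hf : (0 : ℝ) < n.factorial := by exact_mod_cast n.factorial_pos
  have h4 : ((n : ℝ) ^ ((3 : ℝ) / 4)) ^ 4 = (n : ℝ) ^ 3 := by
    rw [← Real.rpow_natCast, ← Real.rpow_mul hn, ← Real.rpow_natCast]
    norm_num
  have h1 : ((n : ℝ) ^ n / n.factorial) ≤ Real.exp n := Real.pow_div_factorial_le_exp _ hn n
  have h2 : (16 * a ^ 4 * Real.exp 3) ^ n / n.factorial ≤ Real.exp (16 * a ^ 4 * Real.exp 3) :=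
    Real.pow_div_factorial_le_exp _ (by positivity) n
  have h3 : ((n : ℝ) ^ n / n.factorial) ^ 3 ≤ Real.exp 3 ^ n := by
    calc _ ≤ Real.exp n ^ 3 := pow_le_pow_left₀ (by positivity) h1 3
      _ = _ := by rw [← Real.exp_nat_mul, ← Real.exp_nat_mul]; congr 1; push_cast; ring
  have h5 : (Real.exp (4 * a ^ 4 * Real.exp 3)) ^ 4 = Real.exp (16 * a ^ 4 * Real.exp 3) := by
    rw [← Real.exp_nat_mul]; congr 1; push_cast; ring
  refine le_of_pow_le_pow_left₀ (n := 4) (by norm_num) (by positivity) ?_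
  have e1 : ((a * (n : ℝ) ^ ((3 : ℝ) / 4)) ^ n / (n.factorial : ℝ)) ^ 4
      = ((a ^ 4) ^ n / n.factorial) * ((n : ℝ) ^ n / n.factorial) ^ 3 := by
    have : ((a * (n : ℝ) ^ ((3 : ℝ) / 4)) ^ n) ^ 4 = (a ^ 4 * (n : ℝ) ^ 3) ^ n := by
      rw [← h4]; ring
    rw [div_pow, this, mul_pow]
    rw [← pow_mul, ← pow_mul (n : ℝ) 3 n, mul_comm 3 n, pow_mul (n : ℝ) n 3]
    field_simp
  rw [e1, mul_pow, h5]
  calc _ ≤ ((a ^ 4) ^ n / n.factorial) * Real.exp 3 ^ n := by gcongr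
    _ = ((1 / 2) ^ n) ^ 4 * ((16 * a ^ 4 * Real.exp 3) ^ n / n.factorial) := by
      have : ((1 / 2 : ℝ) ^ n) ^ 4 * 16 ^ n = 1 := by
        rw [← pow_mul, mul_comm n 4, pow_mul, ← mul_pow]; norm_num
      rw [mul_pow, mul_pow]
      linear_combination (-(a ^ 4) ^ n / n.factorial * Real.exp 3 ^ n) * this
    _ ≤ _ := by gcongr


/-- Abstract exponential integrability: on a finite measure space, for each `K > 0` there are
`C, κ > 0` (depending only on `K` and `μ(X)`) such that any measurable `φ` with
`‖φ‖_{L^p(μ)} ≤ K A p^{3/4}` for all real `p ≥ 1` satisfies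
`∫ e^{|φ|} dμ ≤ C exp(κ A⁴)`. -/
theorem statement8 {X : Type*} [MeasurableSpace X] (μ : Measure X)
    (hμ : μ Set.univ < ⊤) (K : ℝ) (hK : 0 < K) :
    ∃ C : ℝ, 0 < C ∧ ∃ κ : ℝ, 0 < κ ∧
      ∀ φ : X → ℝ, Measurable φ → ∀ A : ℝ, 0 ≤ A →
        (∀ p : ℝ, 1 ≤ p →
          eLpNorm φ (ENNReal.ofReal p) μ ≤ ENNReal.ofReal (K * A * p ^ ((3 : ℝ) / 4))) →
        ∫⁻ x, ENNReal.ofReal (Real.exp |φ x|) ∂μ ≤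
          ENNReal.ofReal (C * Real.exp (κ * A ^ 4)) := by
  have hμr : ENNReal.ofReal (μ Set.univ).toReal = μ Set.univ := ENNReal.ofReal_toReal hμ.ne
  refine ⟨(μ Set.univ).toReal + 2, by positivity, 4 * K ^ 4 * Real.exp 3, by positivity, ?_⟩
  intro φ hφ A hA h
  set E : ℝ := Real.exp (4 * K ^ 4 * Real.exp 3 * A ^ 4) with hE
  have hE1 : 1 ≤ E := Real.one_le_exp (by positivity)
  have hexp : ∀ x, ENNReal.ofReal (Real.exp |φ x|) =
      ∑' n : ℕ, ENNReal.ofReal (|φ x| ^ n / (n.factorial : ℝ)) := by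
    intro x
    rw [← ENNReal.ofReal_tsum_of_nonneg (fun n => by positivity)
      (Real.summable_pow_div_factorial _), Real.exp_eq_exp_ℝ, NormedSpace.exp_eq_tsum_div]
  have hterm : ∀ n : ℕ, ∫⁻ x, ENNReal.ofReal (|φ x| ^ (n + 1) / ((n + 1).factorial : ℝ)) ∂μ ≤
      ENNReal.ofReal ((1 / 2) ^ (n + 1) * E) := by
    intro n
    have hp := h ((n + 1 : ℕ) : ℝ) (by push_cast; linarith [(Nat.cast_nonneg n : (0 : ℝ) ≤ n)])
    have hf : (0 : ℝ) < (n + 1).factorial := by exact_mod_cast (n + 1).factorial_pos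
    have hI : ∫⁻ x, ENNReal.ofReal (|φ x| ^ (n + 1)) ∂μ =
        eLpNorm φ (ENNReal.ofReal ((n + 1 : ℕ) : ℝ)) μ ^ (n + 1) := by
      have := eLpNorm_nnreal_pow_eq_lintegral (f := φ) (μ := μ) (p := ((n + 1 : ℕ) : NNReal))
        (by positivity)
      rw [ENNReal.ofReal_natCast]
      simp only [NNReal.coe_natCast, ENNReal.rpow_natCast, ENNReal.coe_natCast] at this
      rw [this]
      refine lintegral_congr fun x => ?_
      rw [ENNReal.ofReal_pow (abs_nonneg _), ← Real.norm_eq_abs, ofReal_norm]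
    calc _ = ∫⁻ x, ENNReal.ofReal (|φ x| ^ (n + 1)) *
          ENNReal.ofReal ((n + 1).factorial : ℝ)⁻¹ ∂μ := by
          refine lintegral_congr fun x => ?_
          rw [div_eq_mul_inv, ENNReal.ofReal_mul (by positivity)]
      _ = (∫⁻ x, ENNReal.ofReal (|φ x| ^ (n + 1)) ∂μ) *
          ENNReal.ofReal ((n + 1).factorial : ℝ)⁻¹ := by
          rw [lintegral_mul_const' _ _ ENNReal.ofReal_ne_top]
      _ ≤ ENNReal.ofReal (K * A * ((n + 1 : ℕ) : ℝ) ^ ((3 : ℝ) / 4)) ^ (n + 1) *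
          ENNReal.ofReal ((n + 1).factorial : ℝ)⁻¹ := by
          rw [hI]; gcongr
      _ = ENNReal.ofReal ((K * A * ((n + 1 : ℕ) : ℝ) ^ ((3 : ℝ) / 4)) ^ (n + 1) /
          ((n + 1).factorial : ℝ)) := by
          rw [← ENNReal.ofReal_pow (by positivity), ← ENNReal.ofReal_mul (by positivity),
            ← div_eq_mul_inv]
      _ ≤ _ := by
          apply ENNReal.ofReal_le_ofReal
          refine (term_bound (K * A) (by positivity) (n + 1)).trans_eq ?_
          rw [hE]; congr 2; ring
  have hgeo : ∑' n : ℕ, ENNReal.ofReal ((1 / 2) ^ (n + 1) * E) = ENNReal.ofReal E := by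
    have hs : HasSum (fun n : ℕ => (1 / 2 : ℝ) ^ (n + 1) * E) E := by
      have := (hasSum_geometric_two.mul_left (1 / 2 : ℝ)).mul_right E
      have e2 : (1 / 2 : ℝ) * 2 * E = E := by ring
      rw [e2] at this
      have e3 : (fun n : ℕ => (1 / 2 : ℝ) ^ (n + 1) * E) = fun n : ℕ => 1 / 2 * (1 / 2) ^ n * E := by
        funext n; rw [pow_succ']
      rw [e3]; exact this
    rw [← ENNReal.ofReal_tsum_of_nonneg (fun n => by positivity) hs.summable, hs.tsum_eq]
  have h0 : ∫⁻ x, ENNReal.ofReal (|φ x| ^ 0 / ((Nat.factorial 0 : ℕ) : ℝ)) ∂μ = μ Set.univ := by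
    simp
  calc _ = ∑' n : ℕ, ∫⁻ x, ENNReal.ofReal (|φ x| ^ n / (n.factorial : ℝ)) ∂μ := by
        simp_rw [hexp]
        rw [lintegral_tsum]
        intro n
        have : Measurable fun x => |φ x| := by simpa using hφ.norm
        exact ((this.pow_const n).div_const _).ennreal_ofReal.aemeasurable
    _ = μ Set.univ + ∑' n : ℕ, ∫⁻ x, ENNReal.ofReal
          (|φ x| ^ (n + 1) / ((n + 1).factorial : ℝ)) ∂μ := by
        rw [tsum_eq_zero_add' ENNReal.summable, h0]
    _ ≤ μ Set.univ + ENNReal.ofReal E := by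
        rw [← hgeo]; gcongr with n; exact hterm n
    _ = ENNReal.ofReal ((μ Set.univ).toReal + E) := by
        rw [ENNReal.ofReal_add (by positivity) (by positivity), hμr]
    _ ≤ _ := by
        apply ENNReal.ofReal_le_ofReal
        have : 0 ≤ (μ Set.univ).toReal := by positivity
        nlinarith
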